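/- arXiv:1507.08600 — 2 statements merged into one kernel-verified Lean document; each statement's English description precedes it below -/
import Mathlib

section
/- For all tuples x, y, z over Σ and every index j with rk(x) < j ≤ rk(x) + rk(y), one has (x · y) ⊙_j z = x · (y ⊙_{j − rk(x)} z). -/
/- A tuple over alphabet `α` is modeled as a nonempty `List (List α)`;
components are words `List α`. -/

/-- Rank of a tuple: number of components minus one. -/
def TupRk {α : Type*} (x : List (List α)) : ℕ := x.length - 1

/-- Concatenation of tuples:
`(x₀,…,x_i)·(y₀,…,y_j) = (x₀,…,x_{i−1}, x_i y₀, y₁,…,y_j)`. -/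
def TupConc {α : Type*} (x y : List (List α)) : List (List α) :=
  x.dropLast ++ (x.getLastD [] ++ y.headD []) :: y.tail

/-- Intercalation `x ⊙_l y`: substitutes the tuple `y` into the `l`-th gap of `x`,
`(x₀,…,x_i) ⊙_l (y₀,…,y_j) = (x₀,…,x_{l−2}, x_{l−1}y₀, y₁,…,y_{j−1}, y_j x_l, x_{l+1},…,x_i)`. -/
def TupInter {α : Type*} (x : List (List α)) (l : ℕ) (y : List (List α)) : List (List α) :=
  TupConc (TupConc (x.take l) y) (x.drop l)

/-!
Cutting `x · y` at a gap `j > rk x` cuts inside `y`: the left piece is `x` concatenated with the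
left piece of `y`, and the right piece is that of `y`. Intercalation concatenates `z` between the
two pieces, so associativity of concatenation pulls the factor `x` out.
-/

section TupConc

variable {α : Type*}

theorem tupConc_append_right (x : List (List α)) {y : List (List α)} (hy : y ≠ [])
    (z : List (List α)) : TupConc x (y ++ z) = TupConc x y ++ z := by
  obtain ⟨b, y, rfl⟩ := List.exists_cons_of_ne_nil hy
  simp [TupConc]

theorem tupConc_append_left (x : List (List α)) {y : List (List α)} (hy : y ≠ [])
    (z : List (List α)) : TupConc (x ++ y) z = x ++ TupConc y z := by
  obtain ⟨y, b, rfl⟩ := (List.eq_nil_or_concat' y).resolve_left hy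
  rw [← List.append_assoc]
  simp only [TupConc, List.dropLast_concat, List.getLastD_concat]
  exact List.append_assoc x y _

theorem tupConc_assoc (x y z : List (List α)) :
    TupConc (TupConc x y) z = TupConc x (TupConc y z) := by
  rcases List.eq_nil_or_concat' y with rfl | ⟨y, c, rfl⟩
  · simp [TupConc]
  rcases eq_or_ne y [] with rfl | hy
  · simp [TupConc]
  have hc : [c] ≠ [] := List.cons_ne_nil c []
  calc TupConc (TupConc x (y ++ [c])) z
      = TupConc x y ++ TupConc [c] z := by
        rw [tupConc_append_right x hy, tupConc_append_left _ hc]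
    _ = TupConc x (TupConc (y ++ [c]) z) := by
        rw [tupConc_append_left y hc, tupConc_append_right x hy]

theorem take_tupConc {x : List (List α)} {j : ℕ} (hj : TupRk x < j) (y : List (List α)) :
    (TupConc x y).take j = TupConc x (y.take (j - TupRk x)) := by
  obtain ⟨k, rfl⟩ := Nat.exists_eq_add_of_lt hj
  cases y <;> simp [TupConc, TupRk, List.take_append, Nat.add_assoc]

theorem drop_tupConc {x : List (List α)} {j : ℕ} (hj : TupRk x < j) (y : List (List α)) :
    (TupConc x y).drop j = y.drop (j - TupRk x) := by
  obtain ⟨k, rfl⟩ := Nat.exists_eq_add_of_lt hj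
  cases y <;> simp [TupConc, TupRk, List.drop_append, Nat.add_assoc]

end TupConc

/-- `(x · y) ⊙_j z = x · (y ⊙_{j − rk x} z)` for `rk x < j ≤ rk x + rk y`. -/
theorem tupInter_conc_right {α : Type*} (x y z : List (List α)) (j : ℕ)
    (hx : x ≠ []) (hy : y ≠ []) (hz : z ≠ [])
    (hj1 : TupRk x < j) (hj2 : j ≤ TupRk x + TupRk y) :
    TupInter (TupConc x y) j z = TupConc x (TupInter y (j - TupRk x) z) := by
  calc TupInter (TupConc x y) j z
      = TupConc (TupConc (TupConc x (y.take (j - TupRk x))) z) (y.drop (j - TupRk x)) := by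
        rw [TupInter, take_tupConc hj1, drop_tupConc hj1]
    _ = TupConc x (TupConc (TupConc (y.take (j - TupRk x)) z) (y.drop (j - TupRk x))) := by
        rw [tupConc_assoc x, tupConc_assoc x]
    _ = TupConc x (TupInter y (j - TupRk x) z) := rfl
end

section
/- For all tuples x, y, z over Σ and indices j, l with 1 ≤ l ≤ rk(x) and l + rk(y) ≤ j ≤ rk(x) + rk(y) − 1, one has (x ⊙_l y) ⊙_j z = (x ⊙_{j − rk(y) + 1} z) ⊙_l y. -/
/-!
If `x = A ++ B ++ C`, then intercalating `y` between `A` and `B` gives the concatenation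
`(A · y) · (B ++ C)`. Filling both gaps, in either order, therefore gives `A · y · B · z · C`:
filling the later gap first leaves the earlier one in place, and filling the earlier gap first
shifts the later one by `rk y - 1`, because it replaces one gap by the `rk y` gaps of `y`.
-/

section

variable {α : Type*}

theorem tupConc_ne_nil (x y : List (List α)) : TupConc x y ≠ [] := by
  simp [TupConc]

theorem length_tupConc {x : List (List α)} (hx : x ≠ []) (y : List (List α)) :
    (TupConc x y).length = x.length + TupRk y := by
  have hx_pos : 0 < x.length := List.length_pos_iff.mpr hx
  simp only [TupConc, TupRk, List.length_append, List.length_dropLast, List.length_cons,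
    List.length_tail]
  omega

theorem tupConc_append (x : List (List α)) {y : List (List α)} (hy : y ≠ [])
    (w : List (List α)) : TupConc x (y ++ w) = TupConc x y ++ w := by
  obtain ⟨b, y, rfl⟩ := List.exists_cons_of_ne_nil hy
  simp [TupConc]

theorem append_tupConc (w : List (List α)) {x : List (List α)} (hx : x ≠ [])
    (y : List (List α)) : TupConc (w ++ x) y = w ++ TupConc x y := by
  simp [TupConc, List.dropLast_append_of_ne_nil hx, List.getLastD_eq_getLast?,
    List.getLast?_append_of_ne_nil w hx]

theorem tupInter_append {A : List (List α)} {l : ℕ} (hl : A.length = l) (B y : List (List α)) :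
    TupInter (A ++ B) l y = TupConc (TupConc A y) B := by
  subst hl
  simp [TupInter]

theorem tupInter_first_then_second {A B : List (List α)} (hA : A ≠ []) (hB : B ≠ [])
    (C y z : List (List α)) :
    TupInter (TupInter (A ++ (B ++ C)) A.length y) (A.length + TupRk y + TupRk B) z =
      TupConc (TupConc (TupConc (TupConc A y) B) z) C := by
  have hlen : (TupConc (TupConc A y) B).length = A.length + TupRk y + TupRk B := by
    rw [length_tupConc (tupConc_ne_nil A y), length_tupConc hA]
  rw [tupInter_append rfl, tupConc_append _ hB, tupInter_append hlen]

theorem tupInter_second_then_first (A : List (List α)) {B : List (List α)} (hB : B ≠ [])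
    (C y z : List (List α)) :
    TupInter (TupInter (A ++ (B ++ C)) (A.length + B.length) z) A.length y =
      TupConc (TupConc (TupConc (TupConc A y) B) z) C := by
  calc TupInter (TupInter (A ++ (B ++ C)) (A.length + B.length) z) A.length y
      = TupInter (TupConc (TupConc (A ++ B) z) C) A.length y := by
        rw [← List.append_assoc, tupInter_append List.length_append]
    _ = TupInter (A ++ TupConc (TupConc B z) C) A.length y := by
        rw [append_tupConc A hB, append_tupConc A (tupConc_ne_nil B z)]
    _ = TupConc (TupConc A y) (TupConc (TupConc B z) C) := tupInter_append rfl _ y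
    _ = TupConc (TupConc (TupConc (TupConc A y) B) z) C := by simp only [tupConc_assoc]

end

theorem exists_eq_append_append_of_le_length {β : Type*} (x : List β) {l m : ℕ} (hlm : l ≤ m)
    (hm : m ≤ x.length) :
    ∃ A B C : List β, x = A ++ (B ++ C) ∧ A.length = l ∧ A.length + B.length = m := by
  refine ⟨x.take l, (x.drop l).take (m - l), (x.drop l).drop (m - l), by simp, ?_, ?_⟩ <;>
    simp only [List.length_take, List.length_drop] <;> omega

/-- `(x ⊙_l y) ⊙_j z = (x ⊙_{j − rk y + 1} z) ⊙_l y` for `1 ≤ l ≤ rk x`,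
`l + rk y ≤ j ≤ rk x + rk y − 1`. -/
theorem tupInter_inter_above {α : Type*} (x y z : List (List α)) (j l : ℕ)
    (hx : x ≠ []) (hy : y ≠ []) (hz : z ≠ [])
    (hl1 : 1 ≤ l) (hl2 : l ≤ TupRk x) (hj1 : l + TupRk y ≤ j)
    (hj2 : j ≤ TupRk x + TupRk y - 1) :
    TupInter (TupInter x l y) j z = TupInter (TupInter x (j - TupRk y + 1) z) l y := by
  have hlm : l < j - TupRk y + 1 := by omega
  have hm : j - TupRk y + 1 ≤ x.length := by
    unfold TupRk at *
    omega
  obtain ⟨A, B, C, rfl, rfl, hAB⟩ := exists_eq_append_append_of_le_length x hlm.le hm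
  have hA : A ≠ [] := List.length_pos_iff.mp hl1
  have hB : B ≠ [] := List.length_pos_iff.mp (by omega)
  have hj : j = A.length + TupRk y + TupRk B := by
    unfold TupRk at *
    omega
  rw [← hAB, hj, tupInter_first_then_second hA hB, tupInter_second_then_first A hB]
end
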